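/- Let f : ℝ → ℝ be continuous and nondecreasing, and let u ∈ C²(ℝⁿ) satisfy ℐu(x) = f(u(x)) for every x ∈ ℝⁿ. Assume that |u(x)| ≤ K(1 + |x|^κ) for all x ∈ ℝⁿ, for some K ≥ 0 and κ ∈ [0, 2s). If f is not identically zero, then u is constant, say u(x) = c for all x ∈ ℝⁿ, and f(c) = 0. -/

import Mathlib

open MeasureTheory
open scoped RealInnerProductSpace

/-- The anisotropic integro-differential operator
`ℐu(x) = ∫_{S^{n-1} × ℝ} (u(x + rϑ) + u(x − rϑ) − 2u(x)) dμ(ϑ) dr / |r|^{1+2s}`. -/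
noncomputable def opI (n : ℕ) (s : ℝ)
    (μ : Measure (Metric.sphere (0 : EuclideanSpace ℝ (Fin n)) 1))
    (u : EuclideanSpace ℝ (Fin n) → ℝ) (x : EuclideanSpace ℝ (Fin n)) : ℝ :=
  ∫ p : Metric.sphere (0 : EuclideanSpace ℝ (Fin n)) 1 × ℝ,
    (u (x + p.2 • (p.1 : EuclideanSpace ℝ (Fin n))) +
      u (x - p.2 • (p.1 : EuclideanSpace ℝ (Fin n))) - 2 * u x) / |p.2| ^ (1 + 2 * s)
    ∂(μ.prod volume)

open Asymptotics Filter Set Topology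

/-!
The argument works for the generator `L` of a symmetric jump process with an arbitrary Lévy
measure `ν`. Maximising `u - ε⟨x⟩^{2b}`, with `κ < 2b < 2s`, gives `f(u) ≤ 0` in the limit
`ε → 0`, and applied to `-u` it gives `f(u) = 0`. As `f ≢ 0` is monotone, `u` is then bounded on
one side, so up to sign and an additive constant it is a function `v ≥ 1` with `Lv = 0`.

For such `v` let `A(x) = ∫ (√v(x+q) - √v(x))² dρ(q)`, with `ρ` the restriction of `ν` to a compact
set. The integrand is jointly convex in `(v(x), v(x+q))`, so `A` is subharmonic, while
`A ≤ L(v log v)`. Maximising `v log v + T A - ε⟨x⟩^{2b}` and letting `T → ∞` and then `ε → 0`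
yields `A = 0`. Thus `v` does not change along `ν`-almost every jump; for the stable measure this
makes `∇v(x) · ϑ` vanish for `μ`-almost every `ϑ`, and nondegeneracy gives `∇v = 0`.
-/

section GrowthWeight

variable {E : Type*} [NormedAddCommGroup E]

/-- The model growth `⟨x⟩^{2b}`, where `⟨x⟩ = (1 + ‖x‖²)^{1/2}` is the Japanese bracket. -/
noncomputable def growthWeight (b : ℝ) (x : E) : ℝ :=
  (1 + ‖x‖ ^ 2) ^ b

theorem growthWeight_pos (b : ℝ) (x : E) : 0 < growthWeight b x := by
  unfold growthWeight; positivity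

theorem one_le_growthWeight {b : ℝ} (hb : 0 ≤ b) (x : E) : 1 ≤ growthWeight b x :=
  Real.one_le_rpow (by linarith [sq_nonneg ‖x‖]) hb

theorem norm_growthWeight (b : ℝ) (x : E) : ‖growthWeight b x‖ = growthWeight b x :=
  Real.norm_of_nonneg (growthWeight_pos b x).le

theorem continuous_growthWeight (b : ℝ) : Continuous (growthWeight b : E → ℝ) :=
  Continuous.rpow_const (by fun_prop) fun _ => Or.inl (by positivity)

theorem growthWeight_mono {a b : ℝ} (hab : a ≤ b) (x : E) :
    growthWeight a x ≤ growthWeight b x :=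
  Real.rpow_le_rpow_of_exponent_le (by linarith [sq_nonneg ‖x‖]) hab

theorem growthWeight_mul (a b : ℝ) (x : E) :
    growthWeight a x * growthWeight b x = growthWeight (a + b) x :=
  (Real.rpow_add (by positivity) a b).symm

theorem growthWeight_rpow (a b : ℝ) (x : E) : growthWeight a x ^ b = growthWeight (a * b) x :=
  (Real.rpow_mul (by positivity) a b).symm

theorem norm_rpow_two_mul (b : ℝ) (x : E) : ‖x‖ ^ (2 * b) = (‖x‖ ^ 2) ^ b := by
  rw [Real.rpow_mul (norm_nonneg x), Real.rpow_two]

theorem norm_rpow_le_growthWeight {b : ℝ} (hb : 0 ≤ b) (x : E) :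
    ‖x‖ ^ (2 * b) ≤ growthWeight b x := by
  rw [norm_rpow_two_mul]
  exact Real.rpow_le_rpow (by positivity) (by linarith) hb

theorem growthWeight_le_norm_rpow {b : ℝ} (hb : 0 ≤ b) {z : E} (hz : 1 ≤ ‖z‖) :
    growthWeight b z ≤ 2 ^ b * ‖z‖ ^ (2 * b) := by
  rw [norm_rpow_two_mul, ← Real.mul_rpow zero_le_two (by positivity)]
  exact Real.rpow_le_rpow (by positivity) (by nlinarith) hb

theorem growthWeight_add_le {b : ℝ} (hb : 0 ≤ b) (x z : E) :
    growthWeight b (x + z) ≤ 2 ^ b * growthWeight b x * growthWeight b z := by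
  have hsq : 1 + ‖x + z‖ ^ 2 ≤ 2 * (1 + ‖x‖ ^ 2) * (1 + ‖z‖ ^ 2) := by
    have := pow_le_pow_left₀ (norm_nonneg _) (norm_add_le x z) 2
    nlinarith [sq_nonneg (‖x‖ - ‖z‖), mul_nonneg (sq_nonneg ‖x‖) (sq_nonneg ‖z‖)]
  unfold growthWeight
  rw [← Real.mul_rpow zero_le_two (by positivity), ← Real.mul_rpow (by positivity) (by positivity)]
  exact Real.rpow_le_rpow (by positivity) hsq hb

theorem isBigO_growthWeight_iff {u : E → ℝ} {b : ℝ} :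
    u =O[⊤] growthWeight b ↔ ∃ C, 0 ≤ C ∧ ∀ x, |u x| ≤ C * growthWeight b x := by
  refine ⟨fun h => ?_, fun ⟨C, _, hC⟩ => ?_⟩
  · obtain ⟨C, hC, hCu⟩ := h.exists_nonneg
    exact ⟨C, hC, fun x => (isBigOWith_top.1 hCu x).trans_eq (by rw [norm_growthWeight])⟩
  · exact isBigO_of_le' _ fun x => (hC x).trans_eq (by rw [norm_growthWeight])

theorem isBigO_growthWeight {a b : ℝ} (hab : a ≤ b) :
    (growthWeight a : E → ℝ) =O[⊤] growthWeight b :=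
  isBigO_of_le _ fun x => by
    simpa only [norm_growthWeight] using growthWeight_mono hab x

theorem isBigO_const_growthWeight (c : ℝ) {b : ℝ} (hb : 0 ≤ b) :
    (fun _ : E => c) =O[⊤] growthWeight b :=
  (isBigO_const_const c (one_ne_zero (α := ℝ)) ⊤).trans <| isBigO_of_le _ fun x => by
    simpa only [norm_one, norm_growthWeight] using one_le_growthWeight hb x

theorem isBigO_growthWeight_of_abs_le {u : E → ℝ} {K b : ℝ} (hb : 0 ≤ b)
    (hu : ∀ x, |u x| ≤ K * (1 + ‖x‖ ^ (2 * b))) : u =O[⊤] growthWeight b := by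
  refine (isBigO_of_le' (c := K) (g := fun x : E => 1 + ‖x‖ ^ (2 * b)) _ fun x => ?_).trans
    ((isBigO_const_growthWeight 1 hb).add (isBigO_of_le _ fun x => ?_))
  · rw [Real.norm_eq_abs, Real.norm_of_nonneg (by positivity)]
    exact hu x
  · rw [Real.norm_of_nonneg (by positivity), norm_growthWeight]
    exact norm_rpow_le_growthWeight hb x

section Proper

variable [ProperSpace E]

theorem tendsto_one_add_norm_sq_cocompact :
    Tendsto (fun x : E => 1 + ‖x‖ ^ 2) (cocompact E) atTop :=
  tendsto_atTop_add_const_left _ _ <|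
    (tendsto_pow_atTop two_ne_zero).comp tendsto_norm_cocompact_atTop

theorem tendsto_growthWeight_cocompact {b : ℝ} (hb : 0 < b) :
    Tendsto (growthWeight b : E → ℝ) (cocompact E) atTop :=
  (tendsto_rpow_atTop hb).comp tendsto_one_add_norm_sq_cocompact

theorem isLittleO_growthWeight {a b : ℝ} (hab : a < b) :
    (growthWeight a : E → ℝ) =o[cocompact E] growthWeight b := by
  refine (isLittleO_iff_tendsto fun x hx => absurd hx (growthWeight_pos b x).ne').2 ?_
  refine ((tendsto_rpow_neg_atTop (sub_pos.2 hab)).comp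
    tendsto_one_add_norm_sq_cocompact).congr fun x => ?_
  rw [Function.comp_apply, neg_sub, Real.rpow_sub (by positivity)]
  rfl

theorem isLittleO_growthWeight_of_isBigO {g : E → ℝ} {a b : ℝ} (hg : g =O[⊤] growthWeight a)
    (hab : a < b) : g =o[cocompact E] growthWeight b :=
  (hg.mono le_top).trans_isLittleO (isLittleO_growthWeight hab)

theorem exists_forall_sub_growthWeight_le {g : E → ℝ} {b ε : ℝ} (hb : 0 < b) (hε : 0 < ε)
    (hcont : Continuous g) (hg : g =o[cocompact E] growthWeight b) :
    ∃ y, ∀ x, g x - ε * growthWeight b x ≤ g y - ε * growthWeight b y := by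
  refine Continuous.exists_forall_ge (f := fun x => g x - ε * growthWeight b x)
    (hcont.sub (continuous_const.mul (continuous_growthWeight b))) ?_
  refine tendsto_atBot_mono' _ ?_ <|
    tendsto_neg_atTop_atBot.comp ((tendsto_growthWeight_cocompact hb).const_mul_atTop (half_pos hε))
  filter_upwards [hg.bound (half_pos hε)] with x hx
  rw [norm_growthWeight] at hx
  simp only [Function.comp_apply]
  linarith [Real.le_norm_self (g x)]

end Proper

end GrowthWeight

section SecondDiff

/-- The symmetric second difference of `u` at `x` with increment `z`. -/
def secondDiff {E : Type*} [AddCommGroup E] (u : E → ℝ) (x z : E) : ℝ :=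
  u (x + z) + u (x - z) - 2 * u x

theorem secondDiff_neg {E : Type*} [AddCommGroup E] (u : E → ℝ) (x z : E) :
    secondDiff (fun y => -u y) x z = -secondDiff u x z := by
  unfold secondDiff; ring

theorem secondDiff_add_const {E : Type*} [AddCommGroup E] (u : E → ℝ) (c : ℝ) (x z : E) :
    secondDiff (fun y => u y + c) x z = secondDiff u x z := by
  unfold secondDiff; ring

theorem continuous_secondDiff {E : Type*} [AddCommGroup E] [TopologicalSpace E]
    [IsTopologicalAddGroup E] {u : E → ℝ} (hu : Continuous u) :
    Continuous fun p : E × E => secondDiff u p.1 p.2 := by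
  unfold secondDiff; fun_prop

/-- The majorant `min(‖z‖², ‖z‖^{2b})` of the second differences of `C²` functions growing like
`‖x‖^{2b}`: quadratic near the origin, of the growth of the function at infinity. -/
noncomputable def levyGauge {E : Type*} [Norm E] (b : ℝ) (z : E) : ℝ :=
  min (‖z‖ ^ 2) (‖z‖ ^ (2 * b))

theorem rpow_add_le_rpow_add_min {t h b : ℝ} (ht : 1 ≤ t) (hh : 0 ≤ h) (hb : 0 ≤ b)
    (hb1 : b ≤ 1) : (t + h) ^ b ≤ t ^ b + min h (h ^ b) := by
  have ht0 : 0 < t := one_pos.trans_le ht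
  rw [← min_add_add_left]
  refine le_min ?_ (Real.rpow_add_le_add_rpow ht0.le hh hb hb1)
  calc (t + h) ^ b = t ^ b * (1 + h / t) ^ b := by
        rw [← Real.mul_rpow ht0.le (by positivity), mul_add, mul_div_cancel₀ _ ht0.ne', mul_one]
    _ ≤ t ^ b * (1 + b * (h / t)) := by
        gcongr
        exact rpow_one_add_le_one_add_mul_self (by linarith [div_nonneg hh ht0.le]) hb hb1
    _ = t ^ b + t ^ b * (b * (h / t)) := by ring
    _ ≤ t ^ b + t ^ (1 : ℝ) * (1 * (h / t)) := by gcongr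
    _ = t ^ b + h := by rw [Real.rpow_one, one_mul, mul_div_cancel₀ _ ht0.ne']

/-- By concavity of `t ↦ t^b` and the parallelogram law, the second difference is at most twice
the increment of `t ↦ t^b` from `1 + ‖x‖²` to `1 + ‖x‖² + ‖z‖²`. -/
theorem secondDiff_growthWeight_le {E : Type*} [NormedAddCommGroup E] [InnerProductSpace ℝ E]
    {b : ℝ} (hb : 0 ≤ b) (hb1 : b ≤ 1) (x z : E) :
    secondDiff (growthWeight b) x z ≤ 2 * levyGauge b z := by
  have hconc : 1 / 2 * growthWeight b (x + z) + 1 / 2 * growthWeight b (x - z) ≤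
      (1 / 2 * (1 + ‖x + z‖ ^ 2) + 1 / 2 * (1 + ‖x - z‖ ^ 2)) ^ b :=
    (Real.concaveOn_rpow hb hb1).2 (mem_Ici.2 (by positivity)) (mem_Ici.2 (by positivity))
      (by norm_num) (by norm_num) (by norm_num)
  have hmid : 1 / 2 * (1 + ‖x + z‖ ^ 2) + 1 / 2 * (1 + ‖x - z‖ ^ 2) =
      1 + ‖x‖ ^ 2 + ‖z‖ ^ 2 := by
    linarith [parallelogram_law_with_norm ℝ x z, sq ‖x + z‖, sq ‖x - z‖, sq ‖x‖, sq ‖z‖]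
  have hincr := rpow_add_le_rpow_add_min (t := 1 + ‖x‖ ^ 2) (by linarith [sq_nonneg ‖x‖])
    (sq_nonneg ‖z‖) hb hb1
  rw [hmid] at hconc
  unfold secondDiff levyGauge
  rw [norm_rpow_two_mul]
  unfold growthWeight at hconc ⊢
  linarith

theorem continuous_levyGauge {E : Type*} [NormedAddCommGroup E] {b : ℝ} (hb : 0 ≤ b) :
    Continuous (levyGauge b : E → ℝ) := by
  unfold levyGauge
  exact (by fun_prop : Continuous fun z : E => ‖z‖ ^ 2).min
    (continuous_norm.rpow_const fun _ => Or.inr (by positivity))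

variable {E : Type*} [NormedAddCommGroup E]

theorem levyGauge_pos (b : ℝ) {z : E} (hz : z ≠ 0) : 0 < levyGauge b z := by
  have := norm_pos_iff.2 hz
  unfold levyGauge; positivity

theorem levyGauge_of_norm_le_one {b : ℝ} (hb1 : b ≤ 1) {z : E} (hz : ‖z‖ ≤ 1) :
    levyGauge b z = ‖z‖ ^ 2 := by
  refine min_eq_left ?_
  rcases eq_or_ne z 0 with rfl | hz0
  · simpa using Real.rpow_nonneg le_rfl (2 * b)
  · rw [← Real.rpow_two]
    exact Real.rpow_le_rpow_of_exponent_ge (norm_pos_iff.2 hz0) hz (by linarith)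

theorem levyGauge_of_one_le_norm {b : ℝ} (hb1 : b ≤ 1) {z : E} (hz : 1 ≤ ‖z‖) :
    levyGauge b z = ‖z‖ ^ (2 * b) := by
  refine min_eq_right ?_
  rw [← Real.rpow_two]
  exact Real.rpow_le_rpow_of_exponent_le hz (by linarith)

theorem abs_secondDiff_le_of_lipschitzOnWith_fderiv [NormedSpace ℝ E] {u : E → ℝ}
    (hu : Differentiable ℝ u) {L : NNReal} {x z : E}
    (hL : LipschitzOnWith L (fderiv ℝ u) (Metric.closedBall x ‖z‖)) :
    |secondDiff u x z| ≤ 2 * L * ‖z‖ ^ 2 := by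
  have hderiv : ∀ w : E, HasFDerivAt (fun w => u (x + w) + u (x - w))
      (fderiv ℝ u (x + w) - fderiv ℝ u (x - w)) w := fun w => by
    have hadd : HasFDerivAt (fun w => u (x + w)) (fderiv ℝ u (x + w)) w :=
      (hu (x + w)).hasFDerivAt.comp w ((hasFDerivAt_id w).const_add x)
    have hsub : HasFDerivAt (fun w => u (x - w)) (-fderiv ℝ u (x - w)) w :=
      ((hu (x - w)).hasFDerivAt.comp w ((hasFDerivAt_id w).const_sub x)).congr_fderiv
        (by ext; simp)
    exact (hadd.add hsub).congr_fderiv (sub_eq_add_neg _ _).symm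
  have hbound : ∀ w ∈ Metric.closedBall (0 : E) ‖z‖,
      ‖fderiv ℝ u (x + w) - fderiv ℝ u (x - w)‖ ≤ 2 * L * ‖z‖ := fun w hw => by
    rw [mem_closedBall_zero_iff] at hw
    calc ‖fderiv ℝ u (x + w) - fderiv ℝ u (x - w)‖ ≤ L * ‖x + w - (x - w)‖ :=
          hL.norm_sub_le (by simpa using hw) (by simpa using hw)
      _ = L * (2 * ‖w‖) := by
          rw [add_sub_sub_cancel, ← two_smul ℝ w, norm_smul, Real.norm_two]
      _ ≤ L * (2 * ‖z‖) := by gcongr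
      _ = 2 * L * ‖z‖ := by ring
  have hmv := (convex_closedBall (0 : E) ‖z‖).norm_image_sub_le_of_norm_hasFDerivWithin_le
    (fun w _ => (hderiv w).hasFDerivWithinAt) hbound
    (Metric.mem_closedBall_self (norm_nonneg z)) (mem_closedBall_zero_iff.2 le_rfl)
  simpa only [secondDiff, add_zero, sub_zero, ← two_mul, Real.norm_eq_abs, mul_assoc, ← sq]
    using hmv

theorem abs_secondDiff_le_growthWeight {u : E → ℝ} {b C : ℝ} (hb : 0 ≤ b) (hC : 0 ≤ C)
    (hu : ∀ x, |u x| ≤ C * growthWeight b x) (x z : E) :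
    |secondDiff u x z| ≤ 4 * C * 2 ^ b * growthWeight b x * growthWeight b z := by
  set M := 2 ^ b * growthWeight b x * growthWeight b z
  have hadd : |u (x + z)| ≤ C * M :=
    (hu _).trans (mul_le_mul_of_nonneg_left (growthWeight_add_le hb x z) hC)
  have hsub : |u (x - z)| ≤ C * M := by
    have hneg := growthWeight_add_le hb x (-z)
    rw [← sub_eq_add_neg, growthWeight, growthWeight, growthWeight, norm_neg] at hneg
    exact (hu _).trans (mul_le_mul_of_nonneg_left hneg hC)
  have hself : |u x| ≤ C * M := by
    refine (hu x).trans (mul_le_mul_of_nonneg_left ?_ hC)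
    have hx := (growthWeight_pos b x).le
    calc growthWeight b x ≤ 2 ^ b * growthWeight b x :=
          le_mul_of_one_le_left hx (Real.one_le_rpow one_le_two hb)
      _ ≤ M := le_mul_of_one_le_right (by positivity) (one_le_growthWeight hb z)
  calc |secondDiff u x z| ≤ |u (x + z)| + |u (x - z)| + 2 * |u x| := by
        unfold secondDiff
        grw [abs_sub, abs_add_le, abs_mul, abs_two]
    _ ≤ C * M + C * M + 2 * (C * M) := by gcongr
    _ = 4 * C * 2 ^ b * growthWeight b x * growthWeight b z := by ring

theorem exists_abs_secondDiff_le_levyGauge [NormedSpace ℝ E] [ProperSpace E] {u : E → ℝ}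
    (hu : ContDiff ℝ 2 u) {b : ℝ} (hb : 0 ≤ b) (hb1 : b ≤ 1) (hgrowth : u =O[⊤] growthWeight b)
    (R : ℝ) : ∃ D, ∀ x, ‖x‖ ≤ R → ∀ z, |secondDiff u x z| ≤ D * levyGauge b z := by
  have hu' : ContDiff ℝ 1 (fderiv ℝ u) := hu.fderiv_right (by norm_num)
  obtain ⟨L, hL⟩ := hu'.locallyLipschitz.locallyLipschitzOn.exists_lipschitzOnWith_of_compact
    (isCompact_closedBall (0 : E) (R + 1))
  obtain ⟨C, hC, hCu⟩ := isBigO_growthWeight_iff.1 hgrowth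
  set B := 4 * C * 2 ^ b * (1 + R ^ 2) ^ b
  have hB : 0 ≤ B := by positivity
  refine ⟨max (2 * L) (B * 2 ^ b), fun x hx z => ?_⟩
  rcases le_total ‖z‖ 1 with hz | hz
  · have hball : Metric.closedBall x ‖z‖ ⊆ Metric.closedBall 0 (R + 1) :=
      Metric.closedBall_subset_closedBall' (by rw [dist_zero_right]; linarith)
    rw [levyGauge_of_norm_le_one hb1 hz]
    grw [← le_max_left]
    exact abs_secondDiff_le_of_lipschitzOnWith_fderiv (hu.differentiable two_ne_zero)
      (hL.mono hball)
  · rw [levyGauge_of_one_le_norm hb1 hz]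
    grw [← le_max_right]
    have hxR : growthWeight b x ≤ (1 + R ^ 2) ^ b := by unfold growthWeight; gcongr
    calc |secondDiff u x z| ≤ 4 * C * 2 ^ b * growthWeight b x * growthWeight b z :=
          abs_secondDiff_le_growthWeight hb hC hCu x z
      _ ≤ B * (2 ^ b * ‖z‖ ^ (2 * b)) :=
          mul_le_mul (mul_le_mul_of_nonneg_left hxR (by positivity))
            (growthWeight_le_norm_rpow hb hz) (growthWeight_pos b z).le hB
      _ = B * 2 ^ b * ‖z‖ ^ (2 * b) := by ring

end SecondDiff

section LevyOp

/-- The generator `u ↦ ∫ (u(x + z) + u(x - z) - 2u(x)) dν(z)` of the symmetric pure-jump Lévy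
process with Lévy measure `ν` (which need not be symmetric itself). -/
noncomputable def levyOp {E : Type*} [AddCommGroup E] [MeasurableSpace E] (ν : Measure E)
    (u : E → ℝ) (x : E) : ℝ :=
  ∫ z, secondDiff u x z ∂ν

theorem levyOp_neg {E : Type*} [AddCommGroup E] [MeasurableSpace E] (ν : Measure E) (u : E → ℝ)
    (x : E) : levyOp ν (fun y => -u y) x = -levyOp ν u x := by
  simp only [levyOp, secondDiff_neg, integral_neg]

theorem levyOp_add_const {E : Type*} [AddCommGroup E] [MeasurableSpace E] (ν : Measure E)
    (u : E → ℝ) (c : ℝ) (x : E) : levyOp ν (fun y => u y + c) x = levyOp ν u x := by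
  simp only [levyOp, secondDiff_add_const]

theorem integrable_secondDiff {E : Type*} [NormedAddCommGroup E] [NormedSpace ℝ E]
    [ProperSpace E] [MeasurableSpace E] [BorelSpace E] {ν : Measure E} {u : E → ℝ}
    (hu : ContDiff ℝ 2 u) {b : ℝ} (hb : 0 ≤ b) (hb1 : b ≤ 1) (hν : Integrable (levyGauge b) ν)
    (hgrowth : u =O[⊤] growthWeight b) (x : E) :
    Integrable (secondDiff u x) ν := by
  obtain ⟨D, hD⟩ := exists_abs_secondDiff_le_levyGauge hu hb hb1 hgrowth ‖x‖
  refine (hν.const_mul D).mono' ?_ (ae_of_all _ fun z => hD x le_rfl z)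
  exact ((continuous_secondDiff hu.continuous).comp
    (Continuous.prodMk_right x)).aestronglyMeasurable

/-- Subharmonicity for `levyOp ν`, expressed through integrable minorants of the second
differences so that it makes sense for functions whose second differences are not known to be
integrable. -/
def IsLevySubharmonic {E : Type*} [AddCommGroup E] [MeasurableSpace E] (ν : Measure E)
    (A : E → ℝ) : Prop :=
  ∀ x, ∃ l : E → ℝ, Integrable l ν ∧ 0 ≤ ∫ z, l z ∂ν ∧ ∀ z, l z ≤ secondDiff A x z

theorem isLevySubharmonic_zero {E : Type*} [AddCommGroup E] [MeasurableSpace E]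
    (ν : Measure E) : IsLevySubharmonic ν fun _ => 0 := fun _ =>
  ⟨0, integrable_zero _ _ _, by simp, fun z => by simp [secondDiff]⟩

theorem IsLevySubharmonic.const_mul {E : Type*} [AddCommGroup E] [MeasurableSpace E]
    {ν : Measure E} {A : E → ℝ} (hA : IsLevySubharmonic ν A) {T : ℝ} (hT : 0 ≤ T) :
    IsLevySubharmonic ν fun x => T * A x := fun x => by
  obtain ⟨l, hl, hl0, hlA⟩ := hA x
  refine ⟨fun z => T * l z, hl.const_mul T, ?_, fun z => ?_⟩
  · rw [integral_const_mul]
    exact mul_nonneg hT hl0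
  · calc T * l z ≤ T * secondDiff A x z := mul_le_mul_of_nonneg_left (hlA z) hT
      _ = secondDiff (fun x => T * A x) x z := by unfold secondDiff; ring

end LevyOp

section MaximumPrinciple

variable {E : Type*} [NormedAddCommGroup E] [InnerProductSpace ℝ E] [ProperSpace E]
  [MeasurableSpace E] {ν : Measure E}

/-- A weak Omori–Yau principle: the maximum points of `g + A - ε ⟨x⟩^{2b}` almost maximise
`g + A`, and `levyOp ν g` is almost nonpositive there. -/
theorem exists_forall_sub_le_and_levyOp_le {g A : E → ℝ} {b ε : ℝ} (hb : 0 < b) (hb1 : b ≤ 1)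
    (hν : Integrable (levyGauge b) ν) (hε : 0 < ε) (hg : Continuous g)
    (hg_growth : g =o[cocompact E] growthWeight b) (hg_int : ∀ x, Integrable (secondDiff g x) ν)
    (hA : Continuous A) (hA_growth : A =o[cocompact E] growthWeight b)
    (hA_sub : IsLevySubharmonic ν A) :
    ∃ y, (∀ x, g x + A x - ε * growthWeight b x ≤ g y + A y - ε * growthWeight b y) ∧
      levyOp ν g y ≤ ε * (2 * ∫ z, levyGauge b z ∂ν) := by
  obtain ⟨y, hy⟩ := exists_forall_sub_growthWeight_le (g := fun x => g x + A x) hb hε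
    (hg.add hA) (hg_growth.add hA_growth)
  refine ⟨y, hy, ?_⟩
  obtain ⟨l, hl, hl0, hlA⟩ := hA_sub y
  have hmax : ∀ z, secondDiff g y z + l z ≤ ε * (2 * levyGauge b z) := fun z => by
    have hweight := mul_le_mul_of_nonneg_left (secondDiff_growthWeight_le hb.le hb1 y z) hε.le
    have hlA := hlA z
    unfold secondDiff at hweight hlA ⊢
    linarith [hy (y + z), hy (y - z)]
  calc levyOp ν g y ≤ ∫ z, secondDiff g y z + l z ∂ν := by
        rw [integral_add (hg_int y) hl]
        exact le_add_of_nonneg_right hl0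
    _ ≤ ∫ z, ε * (2 * levyGauge b z) ∂ν :=
        integral_mono ((hg_int y).add hl) ((hν.const_mul 2).const_mul ε) hmax
    _ = ε * (2 * ∫ z, levyGauge b z ∂ν) := by simp only [integral_const_mul]

theorem nonpos_of_forall_pos_le_mul {a H : ℝ} (h : ∀ ε > 0, a ≤ ε * H) : a ≤ 0 := by
  have hlim : Tendsto (fun ε => ε * H) (𝓝[>] 0) (𝓝 (0 * H)) :=
    (tendsto_id.mono_left nhdsWithin_le_nhds).mul_const H
  rw [zero_mul] at hlim
  exact ge_of_tendsto hlim (eventually_mem_nhdsWithin.mono h)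

/-- For large `T`, the function `g + T A` is nearly maximised where `A` is small, and the bounded
contribution of `g` is negligible against `T A`. -/
theorem IsLevySubharmonic.nonpos_of_le_levyOp {g A : E → ℝ} {b : ℝ}
    (hA_sub : IsLevySubharmonic ν A) (hb : 0 < b) (hb1 : b ≤ 1) (hν : Integrable (levyGauge b) ν)
    (hA : Continuous A) (hA_growth : A =o[cocompact E] growthWeight b) (hg : Continuous g)
    (hg_growth : g =o[cocompact E] growthWeight b) (hg_int : ∀ x, Integrable (secondDiff g x) ν)
    (hg0 : ∀ x, 0 ≤ g x) (hAg : ∀ x, A x ≤ levyOp ν g x) (x : E) : A x ≤ 0 := by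
  refine nonpos_of_forall_pos_le_mul (H := 2 * ∫ z, levyGauge b z ∂ν) fun ε hε => ?_
  set η := ε * (2 * ∫ z, levyGauge b z ∂ν)
  obtain ⟨m, hm⟩ := exists_forall_sub_growthWeight_le hb hε hg hg_growth
  set M := g m - ε * growthWeight b m + ε * growthWeight b x
  have hT : ∀ T > 0, A x ≤ η + M / T := fun T hT => by
    obtain ⟨y, hy, hgy⟩ := exists_forall_sub_le_and_levyOp_le hb hb1 hν hε hg hg_growth hg_int
      (hA.const_mul T) (hA_growth.const_mul_left T) (hA_sub.const_mul hT.le)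
    have hAy : T * A y ≤ T * η := mul_le_mul_of_nonneg_left ((hAg y).trans hgy) hT.le
    rw [← sub_le_iff_le_add', le_div_iff₀' hT]
    linarith [hy x, hm y, hg0 x]
  have hlim : Tendsto (fun T => η + M / T) atTop (𝓝 (η + 0)) :=
    (tendsto_id.const_div_atTop M).const_add η
  rw [add_zero] at hlim
  exact ge_of_tendsto hlim ((eventually_gt_atTop 0).mono hT)

variable [BorelSpace E]

theorem apply_nonpos_of_levyOp_eq {u : E → ℝ} (hu : ContDiff ℝ 2 u) {a b : ℝ} (ha : 0 ≤ a)
    (hab : a < b) (hb1 : b ≤ 1) (hν : Integrable (levyGauge b) ν)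
    (hgrowth : u =O[⊤] growthWeight a) {f : ℝ → ℝ} (hf : Continuous f) (hf_mono : Monotone f)
    (heq : ∀ x, levyOp ν u x = f (u x)) (x : E) : f (u x) ≤ 0 := by
  have hb : 0 < b := ha.trans_lt hab
  set H := 2 * ∫ z, levyGauge b z ∂ν
  have hε : ∀ ε > 0, f (u x - ε * growthWeight b x) ≤ ε * H := fun ε hε => by
    obtain ⟨y, hy, hLy⟩ := exists_forall_sub_le_and_levyOp_le hb hb1 hν hε hu.continuous
      (isLittleO_growthWeight_of_isBigO hgrowth hab)
      (integrable_secondDiff hu hb.le hb1 hν (hgrowth.trans (isBigO_growthWeight hab.le)))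
      continuous_const (isLittleO_zero _ _) (isLevySubharmonic_zero ν)
    have hxy : u x - ε * growthWeight b x ≤ u y := by
      linarith [hy x, mul_pos hε (growthWeight_pos b y)]
    exact (hf_mono hxy).trans ((heq y).symm.trans_le hLy)
  have hleft : Tendsto (fun ε => f (u x - ε * growthWeight b x)) (𝓝[>] 0)
      (𝓝 (f (u x - 0 * growthWeight b x))) :=
    (Continuous.tendsto (by fun_prop) 0).mono_left nhdsWithin_le_nhds
  have hright : Tendsto (fun ε => ε * H) (𝓝[>] 0) (𝓝 (0 * H)) :=
    (Continuous.tendsto (by fun_prop) 0).mono_left nhdsWithin_le_nhds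
  simpa using le_of_tendsto_of_tendsto hleft hright (eventually_mem_nhdsWithin.mono hε)

theorem apply_eq_zero_of_levyOp_eq {u : E → ℝ} (hu : ContDiff ℝ 2 u) {a b : ℝ} (ha : 0 ≤ a)
    (hab : a < b) (hb1 : b ≤ 1) (hν : Integrable (levyGauge b) ν)
    (hgrowth : u =O[⊤] growthWeight a) {f : ℝ → ℝ} (hf : Continuous f) (hf_mono : Monotone f)
    (heq : ∀ x, levyOp ν u x = f (u x)) (x : E) : f (u x) = 0 := by
  refine (apply_nonpos_of_levyOp_eq hu ha hab hb1 hν hgrowth hf hf_mono heq x).antisymm ?_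
  have hneg := apply_nonpos_of_levyOp_eq hu.neg ha hab hb1 hν hgrowth.neg_left
    (f := fun t => -f (-t)) (by fun_prop) (fun _ _ h => neg_le_neg (hf_mono (neg_le_neg h)))
    (fun x => by rw [levyOp_neg, heq, neg_neg]) x
  simpa using hneg

end MaximumPrinciple

section Hellinger

/-- The integrand `(√b - √a)²` of the squared Hellinger distance. -/
noncomputable def hellingerSq (a b : ℝ) : ℝ :=
  (√b - √a) ^ 2

/-- The partial derivative of `hellingerSq a b` in `a`; by symmetry, `hellingerSlope b a` is the
partial derivative in `b`. -/
noncomputable def hellingerSlope (a b : ℝ) : ℝ :=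
  1 - √b / √a

theorem hellingerSq_nonneg (a b : ℝ) : 0 ≤ hellingerSq a b :=
  sq_nonneg _

theorem hellingerSq_eq_zero_iff {a b : ℝ} (ha : 0 ≤ a) (hb : 0 ≤ b) :
    hellingerSq a b = 0 ↔ b = a := by
  rw [hellingerSq, sq_eq_zero_iff, sub_eq_zero, Real.sqrt_inj hb ha]

theorem hellingerSq_eq {a b : ℝ} (ha : 0 ≤ a) (hb : 0 ≤ b) :
    hellingerSq a b = a + b - 2 * (√a * √b) := by
  rw [hellingerSq, sub_sq, Real.sq_sqrt ha, Real.sq_sqrt hb]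
  ring

theorem hellingerSq_le_add {a b : ℝ} (ha : 0 ≤ a) (hb : 0 ≤ b) : hellingerSq a b ≤ a + b := by
  rw [hellingerSq_eq ha hb]
  linarith [mul_nonneg (Real.sqrt_nonneg a) (Real.sqrt_nonneg b)]

theorem hellingerSlope_mul_add_mul_self {a b : ℝ} (ha : 0 < a) (hb : 0 < b) :
    hellingerSlope a b * a + hellingerSlope b a * b = hellingerSq a b := by
  have hab : √b / √a * a = √a * √b := by
    rw [div_mul_eq_mul_div, mul_div_assoc, Real.div_sqrt, mul_comm]
  have hba : √a / √b * b = √a * √b := by rw [div_mul_eq_mul_div, mul_div_assoc, Real.div_sqrt]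
  rw [hellingerSq_eq ha.le hb.le, hellingerSlope, hellingerSlope]
  linarith

/-- The tangent plane inequality expressing the joint convexity of the 1-homogeneous function
`hellingerSq`. -/
theorem hellingerSlope_mul_add_mul_le {a b a' b' : ℝ} (ha : 0 < a) (hb : 0 < b) (ha' : 0 ≤ a')
    (hb' : 0 ≤ b') :
    hellingerSlope a b * a' + hellingerSlope b a * b' ≤ hellingerSq a' b' := by
  have hamgm : 2 * (√a' * √b') ≤ √b / √a * √a' ^ 2 + √a / √b * √b' ^ 2 := by
    have hsq : √b / √a * √a' ^ 2 + √a / √b * √b' ^ 2 - 2 * (√a' * √b') =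
        (√b * √a' - √a * √b') ^ 2 / (√a * √b) := by
      field_simp
      ring
    rw [← sub_nonneg, hsq]
    positivity
  rw [Real.sq_sqrt ha', Real.sq_sqrt hb'] at hamgm
  rw [hellingerSq_eq ha' hb', hellingerSlope, hellingerSlope]
  linarith

/-- The Hellinger integrand is dominated by the Bregman divergence of `t ↦ t log t`. -/
theorem hellingerSq_le_mul_log {a b : ℝ} (ha : 0 < a) (hb : 0 < b) :
    hellingerSq a b ≤
      b * Real.log b - a * Real.log a - (1 + Real.log a) * (b - a) := by
  have hlog : b * ((Real.log a - Real.log b) / 2) ≤ √a * √b - b :=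
    calc b * ((Real.log a - Real.log b) / 2) = b * Real.log (√a / √b) := by
          rw [Real.log_div (Real.sqrt_pos.2 ha).ne' (Real.sqrt_pos.2 hb).ne',
            Real.log_sqrt ha.le, Real.log_sqrt hb.le, sub_div]
      _ ≤ b * (√a / √b - 1) := by
          gcongr
          exact Real.log_le_sub_one_of_pos (div_pos (Real.sqrt_pos.2 ha) (Real.sqrt_pos.2 hb))
      _ = √a * (b / √b) - b := by ring
      _ = √a * √b - b := by rw [Real.div_sqrt]
  rw [hellingerSq_eq ha.le hb.le]
  linarith

theorem continuous_hellingerSq_comp {X : Type*} [TopologicalSpace X] {g h : X → ℝ}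
    (hg : Continuous g) (hh : Continuous h) : Continuous fun x => hellingerSq (g x) (h x) := by
  unfold hellingerSq; fun_prop

theorem continuous_hellingerSlope_comp {X : Type*} [TopologicalSpace X] {g h : X → ℝ}
    (hg : Continuous g) (hh : Continuous h) (hg0 : ∀ x, 0 < g x) :
    Continuous fun x => hellingerSlope (g x) (h x) := by
  unfold hellingerSlope
  exact continuous_const.sub (hh.sqrt.div hg.sqrt fun x => (Real.sqrt_pos.2 (hg0 x)).ne')

theorem le_secondDiff_hellingerSq {E : Type*} [AddCommGroup E] {v : E → ℝ} (hv : ∀ x, 0 < v x)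
    (x q z : E) :
    hellingerSlope (v x) (v (x + q)) * secondDiff v x z +
        hellingerSlope (v (x + q)) (v x) * secondDiff v (x + q) z ≤
      secondDiff (fun y => hellingerSq (v y) (v (y + q))) x z := by
  have hadd := hellingerSlope_mul_add_mul_le (hv x) (hv (x + q)) (hv (x + z)).le
    (hv (x + z + q)).le
  have hsub := hellingerSlope_mul_add_mul_le (hv x) (hv (x + q)) (hv (x - z)).le
    (hv (x - z + q)).le
  have hself := hellingerSlope_mul_add_mul_self (hv x) (hv (x + q))
  simp only [secondDiff, add_right_comm x q z, ← sub_add_eq_add_sub x z q]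
  linarith

theorem hellingerSq_le_secondDiff_mul_log {E : Type*} [AddCommGroup E] {v : E → ℝ}
    (hv : ∀ x, 0 < v x) (x z : E) :
    hellingerSq (v x) (v (x + z)) ≤
      secondDiff (fun y => v y * Real.log (v y)) x z -
        (1 + Real.log (v x)) * secondDiff v x z := by
  have hadd := hellingerSq_le_mul_log (hv x) (hv (x + z))
  have hsub := (hellingerSq_nonneg _ _).trans (hellingerSq_le_mul_log (hv x) (hv (x - z)))
  unfold secondDiff
  linarith

theorem isBigO_mul_log {E : Type*} [NormedAddCommGroup E] {v : E → ℝ} {a c : ℝ} (ha : 0 ≤ a)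
    (hac : a < c) (hv : ∀ x, 1 ≤ v x) (hgrowth : v =O[⊤] growthWeight a) :
    (fun x => v x * Real.log (v x)) =O[⊤] growthWeight c := by
  set δ := (c - a) / (a + 1)
  have hδ : 0 < δ := div_pos (sub_pos.2 hac) (by linarith)
  have hδa : a * δ ≤ c - a := by
    rw [mul_div_assoc', div_le_iff₀ (by linarith)]
    nlinarith
  have hlog : (fun x => Real.log (v x)) =O[⊤] growthWeight (c - a) :=
    calc (fun x => Real.log (v x)) =O[⊤] fun x => v x ^ δ :=
          isBigO_of_le' (c := δ⁻¹) _ fun x => by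
            have hvx := zero_le_one.trans (hv x)
            rw [Real.norm_of_nonneg (Real.log_nonneg (hv x)),
              Real.norm_of_nonneg (Real.rpow_nonneg hvx δ), ← div_eq_inv_mul]
            exact Real.log_le_rpow_div hvx hδ
      _ =O[⊤] fun x => growthWeight a x ^ δ :=
          hgrowth.rpow hδ.le (Eventually.of_forall fun x => (growthWeight_pos a x).le)
      _ =O[⊤] growthWeight (c - a) := by
          simp only [growthWeight_rpow]
          exact isBigO_growthWeight hδa
  refine (hgrowth.mul hlog).congr_right fun x => ?_
  rw [growthWeight_mul, add_sub_cancel]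

end Hellinger

section HellingerAverage

variable {E : Type*} [NormedAddCommGroup E] [MeasurableSpace E] {ν ρ : Measure E} {K : Set E}

/-- The Hellinger discrepancy between `v` and its translates, averaged against `ρ`. -/
noncomputable def hellingerAverage {E : Type*} [Add E] [MeasurableSpace E] (ρ : Measure E)
    (v : E → ℝ) (x : E) : ℝ :=
  ∫ q, hellingerSq (v x) (v (x + q)) ∂ρ

theorem hellingerAverage_nonneg {E : Type*} [Add E] [MeasurableSpace E] (ρ : Measure E)
    (v : E → ℝ) (x : E) : 0 ≤ hellingerAverage ρ v x :=
  integral_nonneg fun _ => hellingerSq_nonneg _ _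

theorem hellingerAverage_le_levyOp_mul_log {E : Type*} [AddCommGroup E] [MeasurableSpace E]
    {ν ρ : Measure E} (hρν : ρ ≤ ν) {v : E → ℝ} (hv0 : ∀ x, 0 < v x) {x : E}
    (hv_int : Integrable (secondDiff v x) ν)
    (hlog_int : Integrable (secondDiff (fun y => v y * Real.log (v y)) x) ν)
    (hharm : levyOp ν v x = 0) :
    hellingerAverage ρ v x ≤ levyOp ν (fun y => v y * Real.log (v y)) x := by
  set g := fun y => v y * Real.log (v y)
  have hle := hellingerSq_le_secondDiff_mul_log hv0 x
  calc hellingerAverage ρ v x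
      ≤ ∫ z, secondDiff g x z - (1 + Real.log (v x)) * secondDiff v x z ∂ρ := by
        refine integral_mono_of_nonneg (ae_of_all _ fun _ => hellingerSq_nonneg _ _)
          ((hlog_int.sub (hv_int.const_mul _)).mono_measure hρν) (ae_of_all _ hle)
    _ ≤ ∫ z, secondDiff g x z - (1 + Real.log (v x)) * secondDiff v x z ∂ν :=
        integral_mono_measure hρν
          (ae_of_all _ fun z => (hellingerSq_nonneg _ _).trans (hle z))
          (hlog_int.sub (hv_int.const_mul _))
    _ = levyOp ν g x := by
        rw [integral_sub hlog_int (hv_int.const_mul _), integral_const_mul, ← levyOp, ← levyOp,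
          hharm, mul_zero, sub_zero]

theorem integrable_of_ae_mem_isCompact {X : Type*} [TopologicalSpace X] [T2Space X]
    [MeasurableSpace X] [OpensMeasurableSpace X] {ρ : Measure X} [IsFiniteMeasureOnCompacts ρ]
    {K : Set X} (hK : IsCompact K) (hρ : ∀ᵐ x ∂ρ, x ∈ K) {g : X → ℝ} (hg : Continuous g) :
    Integrable g ρ := by
  have hint := hg.continuousOn.integrableOn_compact (μ := ρ) hK
  rwa [IntegrableOn, Measure.restrict_eq_self_of_ae_mem hρ] at hint

variable [IsFiniteMeasure ρ]

theorem isBigO_hellingerAverage (hK : IsCompact K) (hρ : ∀ᵐ z ∂ρ, z ∈ K) {v : E → ℝ} {a : ℝ}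
    (ha : 0 ≤ a) (hv : ∀ x, 0 ≤ v x) (hgrowth : v =O[⊤] growthWeight a) :
    hellingerAverage ρ v =O[⊤] growthWeight a := by
  obtain ⟨C, hC, hCv⟩ := isBigO_growthWeight_iff.1 hgrowth
  obtain ⟨M, hM⟩ := hK.bddAbove_image (continuous_growthWeight a).continuousOn
  refine isBigO_of_le' (c := (C + C * 2 ^ a * M) * ρ.real univ) _ fun x => ?_
  have hx := (growthWeight_pos a x).le
  have hbound : ∀ᵐ q ∂ρ, ‖hellingerSq (v x) (v (x + q))‖ ≤
      (C + C * 2 ^ a * M) * growthWeight a x := by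
    filter_upwards [hρ] with q hq
    calc ‖hellingerSq (v x) (v (x + q))‖ = hellingerSq (v x) (v (x + q)) :=
          Real.norm_of_nonneg (hellingerSq_nonneg _ _)
      _ ≤ |v x| + |v (x + q)| :=
          (hellingerSq_le_add (hv _) (hv _)).trans (add_le_add (le_abs_self _) (le_abs_self _))
      _ ≤ C * growthWeight a x + C * (2 ^ a * growthWeight a x * growthWeight a q) := by
          gcongr
          exacts [hCv x, (hCv _).trans (mul_le_mul_of_nonneg_left (growthWeight_add_le ha x q) hC)]
      _ ≤ C * growthWeight a x + C * (2 ^ a * growthWeight a x * M) := by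
          gcongr
          exact hM (mem_image_of_mem _ hq)
      _ = (C + C * 2 ^ a * M) * growthWeight a x := by ring
  rw [norm_growthWeight]
  exact (norm_integral_le_of_norm_le_const hbound).trans_eq (by ring)

variable [BorelSpace E]

theorem secondDiff_hellingerAverage (hK : IsCompact K) (hρ : ∀ᵐ z ∂ρ, z ∈ K) {v : E → ℝ}
    (hv : Continuous v) (x z : E) :
    secondDiff (hellingerAverage ρ v) x z =
      ∫ q, secondDiff (fun y => hellingerSq (v y) (v (y + q))) x z ∂ρ := by
  have hint : ∀ y, Integrable (fun q => hellingerSq (v y) (v (y + q))) ρ := fun y =>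
    integrable_of_ae_mem_isCompact hK hρ (continuous_hellingerSq_comp (by fun_prop) (by fun_prop))
  simp only [secondDiff, hellingerAverage]
  rw [← integral_const_mul, ← integral_add (hint _) (hint _),
    ← integral_sub (by exact (hint _).add (hint _)) ((hint _).const_mul 2)]

theorem continuous_hellingerAverage [LocallyCompactSpace E] (hK : IsCompact K)
    (hρ : ∀ᵐ z ∂ρ, z ∈ K) {v : E → ℝ} (hv : Continuous v) :
    Continuous (hellingerAverage ρ v) := by
  have hcont := continuous_parametric_integral_of_continuous (μ := ρ)
    (f := fun x q => hellingerSq (v x) (v (x + q)))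
    (continuous_hellingerSq_comp (by fun_prop) (by fun_prop)) hK
  rwa [Measure.restrict_eq_self_of_ae_mem hρ] at hcont

variable [NormedSpace ℝ E] [ProperSpace E]

theorem integrable_prod_mul_secondDiff (hK : IsCompact K) (hρ : ∀ᵐ z ∂ρ, z ∈ K)
    {v : E → ℝ} (hv : ContDiff ℝ 2 v) {b : ℝ} (hb : 0 ≤ b) (hb1 : b ≤ 1)
    (hν : Integrable (levyGauge b) ν) (hgrowth : v =O[⊤] growthWeight b) {α : E → ℝ}
    (hα : Continuous α) (x : E) :
    Integrable (fun p : E × E => α p.1 * secondDiff v (x + p.1) p.2) (ρ.prod ν) := by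
  obtain ⟨R, hR⟩ := hK.isBounded.exists_norm_le
  obtain ⟨D, hD⟩ := exists_abs_secondDiff_le_levyGauge hv hb hb1 hgrowth (‖x‖ + R)
  refine ((integrable_of_ae_mem_isCompact hK hρ hα).norm.mul_prod (hν.const_mul D)).mono' ?_ ?_
  · have := continuous_secondDiff hv.continuous
    exact (by fun_prop : Continuous fun p : E × E =>
      α p.1 * secondDiff v (x + p.1) p.2).aestronglyMeasurable
  · filter_upwards [Measure.quasiMeasurePreserving_fst.ae hρ] with p hp
    rw [norm_mul]
    gcongr
    exact hD _ ((norm_add_le _ _).trans (by grw [hR _ hp])) _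

/-- Joint convexity of `hellingerSq` bounds the second differences of the average from below by
an average of second differences of `v`, whose `ν`-integral vanishes by Fubini. -/
theorem isLevySubharmonic_hellingerAverage [SFinite ν] (hK : IsCompact K)
    (hρ : ∀ᵐ z ∂ρ, z ∈ K) {v : E → ℝ} (hv : ContDiff ℝ 2 v) (hv0 : ∀ x, 0 < v x) {b : ℝ}
    (hb : 0 ≤ b) (hb1 : b ≤ 1) (hν : Integrable (levyGauge b) ν)
    (hgrowth : v =O[⊤] growthWeight b) (hharm : ∀ x, levyOp ν v x = 0) :
    IsLevySubharmonic ν (hellingerAverage ρ v) := fun x => by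
  set β := fun q => hellingerSlope (v x) (v (x + q))
  set α := fun q => hellingerSlope (v (x + q)) (v x)
  have hvc := hv.continuous
  have hβ : Continuous β :=
    continuous_hellingerSlope_comp (by fun_prop) (by fun_prop) fun _ => hv0 _
  have hα : Continuous α :=
    continuous_hellingerSlope_comp (by fun_prop) (by fun_prop) fun _ => hv0 _
  have hcont := continuous_secondDiff hvc
  have hβ_int : ∀ z, Integrable (fun q => β q * secondDiff v x z) ρ := fun z =>
    (integrable_of_ae_mem_isCompact hK hρ hβ).mul_const _
  have hα_int : ∀ z, Integrable (fun q => α q * secondDiff v (x + q) z) ρ := fun z =>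
    integrable_of_ae_mem_isCompact hK hρ (by fun_prop)
  have hprod := integrable_prod_mul_secondDiff hK hρ hv hb hb1 hν hgrowth hα x
  have hx := integrable_secondDiff hv hb hb1 hν hgrowth x
  refine ⟨fun z => (∫ q, β q ∂ρ) * secondDiff v x z + ∫ q, α q * secondDiff v (x + q) z ∂ρ,
    (hx.const_mul _).add hprod.integral_prod_right, Eq.ge ?_, fun z => ?_⟩
  · rw [integral_add (hx.const_mul _) hprod.integral_prod_right, integral_const_mul,
      ← integral_integral_swap hprod]
    simp only [integral_const_mul]
    simp only [levyOp] at hharm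
    simp only [hharm, mul_zero, integral_zero, add_zero]
  · beta_reduce
    rw [secondDiff_hellingerAverage hK hρ hvc, ← integral_mul_const,
      ← integral_add (hβ_int z) (hα_int z)]
    refine integral_mono ((hβ_int z).add (hα_int z))
      (integrable_of_ae_mem_isCompact hK hρ ?_) fun q => le_secondDiff_hellingerSq hv0 x q z
    unfold secondDiff hellingerSq
    fun_prop

end HellingerAverage

section Liouville

theorem ae_of_forall_isCompact_ae_restrict {E : Type*} [NormedAddCommGroup E] [ProperSpace E]
    [MeasurableSpace E] {ν : Measure E} {b : ℝ} (hb : 0 ≤ b) (hν : Integrable (levyGauge b) ν)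
    {p : E → Prop} (hp0 : p 0)
    (hp : ∀ K, IsCompact K → ν K < ⊤ → ∀ᵐ z ∂ν.restrict K, p z) : ∀ᵐ z ∂ν, p z := by
  set K : ℕ → Set E := fun k =>
    Metric.closedBall 0 k ∩ {z | 1 / ((k : ℝ) + 1) ≤ levyGauge b z}
  have hK : ∀ k, IsCompact (K k) := fun k =>
    (isCompact_closedBall _ _).inter_right
      (isClosed_le continuous_const (continuous_levyGauge hb))
  have hνK : ∀ k, ν (K k) < ⊤ := fun k =>
    (measure_mono inter_subset_right).trans_lt (hν.measure_ge_lt_top (by positivity))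
  have hcover : ∀ z : E, z ≠ 0 → z ∈ ⋃ k, K k := fun z hz => by
    obtain ⟨i, hi⟩ := exists_nat_ge ‖z‖
    obtain ⟨j, hj⟩ := exists_nat_one_div_lt (levyGauge_pos b hz)
    refine mem_iUnion.2 ⟨max i j, mem_closedBall_zero_iff.2 (hi.trans ?_), le_trans ?_ hj.le⟩
    · exact_mod_cast le_max_left i j
    · exact Nat.one_div_le_one_div (le_max_right i j)
  have hunion := (ae_restrict_iUnion_iff K p).2 fun k => hp _ (hK k) (hνK k)
  filter_upwards [ae_imp_of_ae_restrict hunion] with z hz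
  rcases eq_or_ne z 0 with rfl | hz0
  · exact hp0
  · exact hz (hcover z hz0)

variable {E : Type*} [NormedAddCommGroup E] [InnerProductSpace ℝ E] [ProperSpace E]
  [MeasurableSpace E] [BorelSpace E] {ν : Measure E} [SFinite ν]

theorem hellingerAverage_restrict_nonpos {v : E → ℝ} (hv : ContDiff ℝ 2 v) (hv1 : ∀ x, 1 ≤ v x)
    {a b : ℝ} (ha : 0 ≤ a) (hab : a < b) (hb1 : b ≤ 1) (hν : Integrable (levyGauge b) ν)
    (hgrowth : v =O[⊤] growthWeight a) (hharm : ∀ x, levyOp ν v x = 0) {K : Set E}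
    (hK : IsCompact K) (hνK : ν K < ⊤) (x : E) : hellingerAverage (ν.restrict K) v x ≤ 0 := by
  have : IsFiniteMeasure (ν.restrict K) := isFiniteMeasure_restrict.2 hνK.ne
  have hv0 : ∀ x, 0 < v x := fun x => one_pos.trans_le (hv1 x)
  have hb : 0 < b := ha.trans_lt hab
  have hKae : ∀ᵐ z ∂ν.restrict K, z ∈ K := ae_restrict_mem hK.measurableSet
  have hgrowth_b := hgrowth.trans (isBigO_growthWeight hab.le)
  obtain ⟨c, hac, hcb⟩ := exists_between hab
  have hlog_growth := isBigO_mul_log ha hac hv1 hgrowth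
  have hlog : ContDiff ℝ 2 fun x => v x * Real.log (v x) := hv.mul (hv.log fun x => (hv0 x).ne')
  have hlog_int := integrable_secondDiff hlog hb.le hb1 hν
    (hlog_growth.trans (isBigO_growthWeight hcb.le))
  exact (isLevySubharmonic_hellingerAverage hK hKae hv hv0 hb.le hb1 hν hgrowth_b
    hharm).nonpos_of_le_levyOp hb hb1 hν (continuous_hellingerAverage hK hKae hv.continuous)
    (isLittleO_growthWeight_of_isBigO
      (isBigO_hellingerAverage hK hKae ha (fun x => (hv0 x).le) hgrowth) hab)
    hlog.continuous (isLittleO_growthWeight_of_isBigO hlog_growth hcb) hlog_int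
    (fun x => mul_nonneg (hv0 x).le (Real.log_nonneg (hv1 x)))
    (fun x => hellingerAverage_le_levyOp_mul_log Measure.restrict_le_self hv0
      (integrable_secondDiff hv hb.le hb1 hν hgrowth_b x) (hlog_int x) (hharm x)) x

theorem ae_apply_add_eq_of_levyOp_eq_zero {v : E → ℝ} (hv : ContDiff ℝ 2 v)
    (hv_bdd : BddBelow (range v)) {a b : ℝ} (ha : 0 ≤ a) (hab : a < b) (hb1 : b ≤ 1)
    (hν : Integrable (levyGauge b) ν) (hgrowth : v =O[⊤] growthWeight a)
    (hharm : ∀ x, levyOp ν v x = 0) (x : E) : ∀ᵐ z ∂ν, v (x + z) = v x := by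
  obtain ⟨m, hm⟩ := hv_bdd
  set w : E → ℝ := fun y => v y + (1 - m)
  have hw1 : ∀ y, 1 ≤ w y := fun y => by linarith [hm (mem_range_self y)]
  have hw0 : ∀ y, 0 ≤ w y := fun y => zero_le_one.trans (hw1 y)
  have hw : ContDiff ℝ 2 w := hv.add contDiff_const
  refine ae_of_forall_isCompact_ae_restrict (ha.trans hab.le) hν (by rw [add_zero])
    fun K hK hνK => ?_
  have : IsFiniteMeasure (ν.restrict K) := isFiniteMeasure_restrict.2 hνK.ne
  have hzero : hellingerAverage (ν.restrict K) w x = 0 :=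
    (hellingerAverage_restrict_nonpos hw hw1 ha hab hb1 hν
      (hgrowth.add (isBigO_const_growthWeight _ ha))
      (fun y => (levyOp_add_const ν v _ y).trans (hharm y)) hK hνK x).antisymm
      (hellingerAverage_nonneg _ _ _)
  have hwc := hw.continuous
  have hint := integrable_of_ae_mem_isCompact hK (ae_restrict_mem (μ := ν) hK.measurableSet)
    (continuous_hellingerSq_comp (g := fun _ => w x) (h := fun z => w (x + z))
      (by fun_prop) (by fun_prop))
  filter_upwards [(integral_eq_zero_iff_of_nonneg (fun z => hellingerSq_nonneg _ _) hint).1 hzero]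
    with z hz
  exact add_right_cancel ((hellingerSq_eq_zero_iff (hw0 _) (hw0 _)).1 hz)

theorem ae_apply_add_eq_of_levyOp_eq {u : E → ℝ} (hu : ContDiff ℝ 2 u) {a b : ℝ} (ha : 0 ≤ a)
    (hab : a < b) (hb1 : b ≤ 1) (hν : Integrable (levyGauge b) ν)
    (hgrowth : u =O[⊤] growthWeight a) {f : ℝ → ℝ} (hf : Continuous f) (hf_mono : Monotone f)
    (hf_ne : ∃ r, f r ≠ 0) (heq : ∀ x, levyOp ν u x = f (u x)) (x : E) :
    ∀ᵐ z ∂ν, u (x + z) = u x := by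
  have hzero := apply_eq_zero_of_levyOp_eq hu ha hab hb1 hν hgrowth hf hf_mono heq
  have hharm : ∀ y, levyOp ν u y = 0 := fun y => (heq y).trans (hzero y)
  obtain ⟨r, hr⟩ := hf_ne
  rcases hr.lt_or_gt with hneg | hpos
  · have hru : ∀ y, r ≤ u y := fun y =>
      (hf_mono.reflect_lt (hneg.trans_eq (hzero y).symm)).le
    exact ae_apply_add_eq_of_levyOp_eq_zero hu ⟨r, forall_mem_range.2 hru⟩ ha hab hb1 hν hgrowth
      hharm x
  · have hur : ∀ y, u y ≤ r := fun y =>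
      (hf_mono.reflect_lt ((hzero y).trans_lt hpos)).le
    filter_upwards [ae_apply_add_eq_of_levyOp_eq_zero hu.neg
      ⟨-r, forall_mem_range.2 fun y => neg_le_neg (hur y)⟩ ha hab hb1 hν hgrowth.neg_left
      (fun y => by rw [levyOp_neg, hharm, neg_zero]) x] with z hz
    exact neg_injective hz

end Liouville

section StableMeasure

variable {E : Type*} [NormedAddCommGroup E] [NormedSpace ℝ E] [MeasurableSpace E]

/-- The density of the radial measure `dr / |r|^{1+2s}`. -/
noncomputable def stableDensity (s r : ℝ) : ENNReal :=
  ENNReal.ofReal (1 / |r| ^ (1 + 2 * s))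

/-- The image of `dμ(ϑ) dr / |r|^{1+2s}` under `(ϑ, r) ↦ rϑ`, so that `opI n s μ` is
`levyOp (stableMeasure s μ)`. -/
noncomputable def stableMeasure (s : ℝ) (μ : Measure (Metric.sphere (0 : E) 1)) : Measure E :=
  ((μ.prod volume).withDensity (stableDensity s ∘ Prod.snd)).map fun p => p.2 • (p.1 : E)

instance sFinite_stableMeasure (s : ℝ) (μ : Measure (Metric.sphere (0 : E) 1)) [SFinite μ] :
    SFinite (stableMeasure s μ) := by
  unfold stableMeasure; infer_instance

theorem measurable_stableDensity (s : ℝ) : Measurable (stableDensity s) := by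
  unfold stableDensity; fun_prop

theorem stableDensity_lt_top (s r : ℝ) : stableDensity s r < ⊤ :=
  ENNReal.ofReal_lt_top

theorem stableDensity_ne_zero (s : ℝ) {r : ℝ} (hr : r ≠ 0) : stableDensity s r ≠ 0 :=
  (ENNReal.ofReal_pos.2 (by positivity)).ne'

theorem toReal_stableDensity_smul (s r t : ℝ) :
    (stableDensity s r).toReal • t = t / |r| ^ (1 + 2 * s) := by
  rw [stableDensity, ENNReal.toReal_ofReal (by positivity), smul_eq_mul, one_div_mul_eq_div]

variable [BorelSpace E] {s : ℝ} {μ : Measure (Metric.sphere (0 : E) 1)}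

theorem measurable_polar : Measurable fun p : Metric.sphere (0 : E) 1 × ℝ => p.2 • (p.1 : E) :=
  Continuous.measurable (by fun_prop)

theorem integral_stableMeasure {g : E → ℝ} (hg : Measurable g) :
    ∫ z, g z ∂stableMeasure s μ = ∫ p : Metric.sphere (0 : E) 1 × ℝ,
      g (p.2 • (p.1 : E)) / |p.2| ^ (1 + 2 * s) ∂(μ.prod volume) := by
  rw [stableMeasure, integral_map measurable_polar.aemeasurable hg.aestronglyMeasurable,
    integral_withDensity_eq_integral_toReal_smul ((measurable_stableDensity s).comp measurable_snd)
      (ae_of_all _ fun _ => stableDensity_lt_top _ _)]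
  simp only [Function.comp_apply, toReal_stableDensity_smul]

theorem integrable_stableMeasure_iff {g : E → ℝ} (hg : Measurable g) :
    Integrable g (stableMeasure s μ) ↔ Integrable (fun p : Metric.sphere (0 : E) 1 × ℝ =>
      g (p.2 • (p.1 : E)) / |p.2| ^ (1 + 2 * s)) (μ.prod volume) := by
  rw [stableMeasure, integrable_map_measure hg.aestronglyMeasurable measurable_polar.aemeasurable,
    integrable_withDensity_iff_integrable_smul' ((measurable_stableDensity s).comp measurable_snd)
      (ae_of_all _ fun _ => stableDensity_lt_top _ _)]
  simp only [Function.comp_apply, toReal_stableDensity_smul]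

theorem integrable_levyGauge_div {b : ℝ} (hbs : b < s) (hs1 : s < 1) :
    Integrable fun r : ℝ => levyGauge b r / |r| ^ (1 + 2 * s) := by
  have hnear : IntegrableOn (fun r : ℝ => r ^ (1 - 2 * s)) (Ioc 0 1) :=
    (intervalIntegrable_iff_integrableOn_Ioc_of_le zero_le_one).1
      (intervalIntegral.intervalIntegrable_rpow' (by linarith))
  have hfar : IntegrableOn (fun r : ℝ => r ^ (2 * b - (1 + 2 * s))) (Ioi 1) :=
    integrableOn_Ioi_rpow_of_lt (by linarith) one_pos
  have hhalf : IntegrableOn (fun r : ℝ => levyGauge b r / |r| ^ (1 + 2 * s)) (Ioi 0) := by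
    rw [← Ioc_union_Ioi_eq_Ioi (zero_le_one' ℝ)]
    refine (hnear.congr_fun (fun r hr => ?_) measurableSet_Ioc).union
      (hfar.congr_fun (fun r hr => ?_) measurableSet_Ioi)
    · have hr1 : ‖r‖ ≤ 1 := by rw [Real.norm_of_nonneg hr.1.le]; exact hr.2
      rw [levyGauge_of_norm_le_one (by linarith) hr1, Real.norm_eq_abs, ← Real.rpow_two,
        abs_of_pos hr.1, ← Real.rpow_sub hr.1]
      ring_nf
    · have hr0 : 0 < r := one_pos.trans hr
      have hr1 : 1 ≤ ‖r‖ := by rw [Real.norm_of_nonneg hr0.le]; exact (mem_Ioi.1 hr).le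
      beta_reduce
      rw [levyGauge_of_one_le_norm (by linarith) hr1, Real.norm_eq_abs, abs_of_pos hr0,
        ← Real.rpow_sub hr0]
  have hnorm := (integrable_fun_norm_addHaar (volume : Measure ℝ)).2
    (by simpa only [Module.finrank_self, Nat.sub_self, pow_zero, one_smul] using hhalf)
  simpa only [levyGauge, norm_norm, Real.norm_eq_abs, abs_abs] using hnorm

theorem integrable_levyGauge_stableMeasure [IsFiniteMeasure μ] {b : ℝ} (hbs : b < s) (hs1 : s < 1) :
    Integrable (levyGauge b) (stableMeasure s μ) := by
  rw [integrable_stableMeasure_iff (by unfold levyGauge; fun_prop)]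
  refine ((integrable_levyGauge_div hbs hs1).comp_snd μ).congr (ae_of_all _ fun p => ?_)
  simp [levyGauge, norm_smul]

theorem opI_eq_levyOp {n : ℕ} {s : ℝ} {μ : Measure (Metric.sphere (0 : EuclideanSpace ℝ (Fin n)) 1)}
    {u : EuclideanSpace ℝ (Fin n) → ℝ} (hu : Continuous u) (x : EuclideanSpace ℝ (Fin n)) :
    opI n s μ u x = levyOp (stableMeasure s μ) u x :=
  (integral_stableMeasure ((continuous_secondDiff hu).comp
    (Continuous.prodMk_right x)).measurable).symm

theorem ae_forall_apply_add_smul_eq {v : E → ℝ} (hv : Continuous v) {x : E}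
    (h : ∀ᵐ z ∂stableMeasure s μ, v (x + z) = v x) :
    ∀ᵐ ϑ : Metric.sphere (0 : E) 1 ∂μ, ∀ r : ℝ, v (x + r • (ϑ : E)) = v x := by
  have hprod := ae_of_ae_map measurable_polar.aemeasurable h
  rw [ae_withDensity_iff ((measurable_stableDensity s).comp measurable_snd)] at hprod
  filter_upwards [Measure.ae_ae_of_ae_prod hprod] with ϑ hϑ
  refine congrFun ((Continuous.ae_eq_iff_eq volume (f := fun r : ℝ => v (x + r • (ϑ : E)))
    (g := fun _ => v x) (by fun_prop) continuous_const).1 ?_)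
  filter_upwards [hϑ, Measure.ae_ne volume 0] with r hr hr0
  exact hr (stableDensity_ne_zero s hr0)

end StableMeasure

section Nondegenerate

variable {E : Type*} [NormedAddCommGroup E] [InnerProductSpace ℝ E] [CompleteSpace E]
  [MeasurableSpace E] {μ : Measure (Metric.sphere (0 : E) 1)}

theorem eq_zero_of_ae_apply_eq_zero {p : ℝ} (hp : p ≠ 0)
    (hμ : ∀ ξ : Metric.sphere (0 : E) 1, 0 < ∫ ϑ, |⟪(ξ : E), (ϑ : E)⟫| ^ p ∂μ) {ℓ : E →L[ℝ] ℝ}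
    (hℓ : ∀ᵐ ϑ : Metric.sphere (0 : E) 1 ∂μ, ℓ ϑ = 0) : ℓ = 0 := by
  obtain ⟨w, rfl⟩ := (InnerProductSpace.toDual ℝ E).surjective ℓ
  by_contra hne
  have hw : w ≠ 0 := fun h => hne (by rw [h, map_zero])
  refine (hμ ⟨‖w‖⁻¹ • w, by simp [norm_smul, hw]⟩).ne' (integral_eq_zero_of_ae ?_)
  filter_upwards [hℓ] with ϑ hϑ
  rw [InnerProductSpace.toDual_apply_apply] at hϑ
  simp [real_inner_smul_left, hϑ, Real.zero_rpow hp]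

theorem exists_forall_eq_of_ae_stableMeasure [BorelSpace E] {s p : ℝ} (hp : p ≠ 0)
    (hμ : ∀ ξ : Metric.sphere (0 : E) 1, 0 < ∫ ϑ, |⟪(ξ : E), (ϑ : E)⟫| ^ p ∂μ) {v : E → ℝ}
    (hv : Differentiable ℝ v) (h : ∀ x, ∀ᵐ z ∂stableMeasure s μ, v (x + z) = v x) (x y : E) :
    v x = v y := by
  refine is_const_of_fderiv_eq_zero hv (fun x => eq_zero_of_ae_apply_eq_zero hp hμ ?_) x y
  filter_upwards [ae_forall_apply_add_smul_eq hv.continuous (h x)] with ϑ hϑ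
  rw [← (hv x).lineDeriv_eq_fderiv, lineDeriv, funext hϑ, deriv_const]

end Nondegenerate

/-- If `f` is continuous and nondecreasing, `u ∈ C²(ℝⁿ)` solves `ℐu = f(u)` in `ℝⁿ`,
`|u(x)| ≤ K(1+|x|^κ)` with `κ ∈ [0,2s)`, and `f` is not identically zero, then `u` is
constant, say `u ≡ c`, with `f(c) = 0`. -/
theorem constant_of_semilinear_of_subcritical_growth
    (n : ℕ) (hn : 1 ≤ n) (s : ℝ) (hs : s ∈ Set.Ioo (0 : ℝ) 1)
    (μ : Measure (Metric.sphere (0 : EuclideanSpace ℝ (Fin n)) 1)) [IsFiniteMeasure μ]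
    (lam Λ : ℝ) (hlam : 0 < lam) (hΛ : 0 < Λ)
    (hnondeg : ∀ ν : Metric.sphere (0 : EuclideanSpace ℝ (Fin n)) 1,
      lam ≤ ∫ ϑ : Metric.sphere (0 : EuclideanSpace ℝ (Fin n)) 1,
        |⟪(ν : EuclideanSpace ℝ (Fin n)), (ϑ : EuclideanSpace ℝ (Fin n))⟫| ^ (2 * s) ∂μ)
    (hμΛ : μ Set.univ ≤ ENNReal.ofReal Λ)
    (f : ℝ → ℝ) (hf_cont : Continuous f) (hf_mono : Monotone f)
    (u : EuclideanSpace ℝ (Fin n) → ℝ) (hu : ContDiff ℝ 2 u)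
    (heq : ∀ x, opI n s μ u x = f (u x))
    (K κ : ℝ) (hK : 0 ≤ K) (hκ0 : 0 ≤ κ) (hκ : κ < 2 * s)
    (hgrowth : ∀ x, |u x| ≤ K * (1 + ‖x‖ ^ κ))
    (hf_ne : ∃ r, f r ≠ 0) :
    ∃ c : ℝ, (∀ x, u x = c) ∧ f c = 0 := by
  obtain ⟨b, hκb, hbs⟩ := exists_between (show κ / 2 < s by linarith)
  have ha : 0 ≤ κ / 2 := by positivity
  have hb1 : b ≤ 1 := (hbs.trans hs.2).le
  have hu_growth : u =O[⊤] growthWeight (κ / 2) :=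
    isBigO_growthWeight_of_abs_le ha (by rwa [mul_div_cancel₀ κ two_ne_zero])
  have hν := integrable_levyGauge_stableMeasure (μ := μ) hbs hs.2
  have hlevy : ∀ x, levyOp (stableMeasure s μ) u x = f (u x) := fun x => by
    rw [← opI_eq_levyOp hu.continuous, heq]
  have hconst := exists_forall_eq_of_ae_stableMeasure (mul_pos two_pos hs.1).ne'
    (fun ξ => hlam.trans_le (hnondeg ξ)) (hu.differentiable two_ne_zero)
    (ae_apply_add_eq_of_levyOp_eq hu ha hκb hb1 hν hu_growth hf_cont hf_mono hf_ne hlevy)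
  exact ⟨u 0, fun x => hconst x 0,
    apply_eq_zero_of_levyOp_eq hu ha hκb hb1 hν hu_growth hf_cont hf_mono hlevy 0⟩
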